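/- Let 2 < q < ∞ and let E be an n-dimensional real Banach space. There exist an absolute constant c₀ and a natural number m with m ≤ n · (c₀(1 + ln n))^{1/(1 − 2/q)} such that the Rademacher cotype q constant of the identity of E satisfies C_q(Id_E) ≤ 2 · C_q^m(Id_E). -/

import Mathlib

open scoped ENNReal NNReal BigOperators

noncomputable section

/-- The `ℓ_p`-sum `(∑ i, f i ^ p) ^ (1/p)` of a finite family in `ℝ≥0∞`,
with the usual sup-modification for `p = ∞`. -/
def eSum (p : ℝ≥0∞) {ι : Type*} [Fintype ι] (f : ι → ℝ≥0∞) : ℝ≥0∞ :=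
  if p = ∞ then ⨆ i, f i else (∑ i, f i ^ p.toReal) ^ (1 / p.toReal)

/-- The weak `ℓ_q`-norm of a finite family of vectors:
`sup { (∑ k |⟨x_k, x*⟩|^q)^(1/q) : x* in the unit ball of the dual }`. -/
def weakLq (q : ℝ≥0∞) {X : Type*} [NormedAddCommGroup X] [NormedSpace ℝ X]
    {n : ℕ} (x : Fin n → X) : ℝ≥0∞ :=
  ⨆ f : {f : X →L[ℝ] ℝ // ‖f‖ ≤ 1}, eSum q fun k => ENNReal.ofReal |f.1 (x k)|

/-- The `(p,q)`-summing norm of `T` with respect to `n` vectors. -/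
def piN (p q : ℝ≥0∞) {X Y : Type*} [NormedAddCommGroup X] [NormedSpace ℝ X]
    [NormedAddCommGroup Y] [NormedSpace ℝ Y] (n : ℕ) (T : X →L[ℝ] Y) : ℝ≥0∞ :=
  ⨆ x : {x : Fin n → X // weakLq q x ≤ 1}, eSum p fun k => ENNReal.ofReal ‖T (x.1 k)‖

/-- The `(p,q)`-summing norm of `T`. -/
def piPQ (p q : ℝ≥0∞) {X Y : Type*} [NormedAddCommGroup X] [NormedSpace ℝ X]
    [NormedAddCommGroup Y] [NormedSpace ℝ Y] (T : X →L[ℝ] Y) : ℝ≥0∞ :=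
  ⨆ n : ℕ, piN p q n T

/-- `T` has rank at most `n`: its range is a finite-dimensional subspace of
dimension at most `n`. -/
def RankLE {X Y : Type*} [NormedAddCommGroup X] [NormedSpace ℝ X]
    [NormedAddCommGroup Y] [NormedSpace ℝ Y] (T : X →L[ℝ] Y) (n : ℕ) : Prop :=
  FiniteDimensional ℝ (LinearMap.range (T : X →ₗ[ℝ] Y)) ∧
    Module.finrank ℝ (LinearMap.range (T : X →ₗ[ℝ] Y)) ≤ n

/-- The average of `‖∑ k, ε k • x k‖²` over all `2^n` sign choices `ε ∈ {-1,1}^n`. -/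
def radAvg {X : Type*} [NormedAddCommGroup X] [NormedSpace ℝ X] {n : ℕ}
    (x : Fin n → X) : ℝ :=
  (∑ ε : Fin n → Bool, ‖∑ k, (if ε k then (1 : ℝ) else -1) • x k‖ ^ 2) / 2 ^ n

/-- The Rademacher cotype `q` constant of `T` with respect to `n` vectors. -/
def cotypeN (q : ℝ) {X Y : Type*} [NormedAddCommGroup X] [NormedSpace ℝ X]
    [NormedAddCommGroup Y] [NormedSpace ℝ Y] (n : ℕ) (T : X →L[ℝ] Y) : ℝ≥0∞ :=
  ⨆ x : {x : Fin n → X // Real.sqrt (radAvg x) ≤ 1},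
    (∑ k, ENNReal.ofReal ‖T (x.1 k)‖ ^ q) ^ (1 / q)

/-- The Rademacher cotype `q` constant of `T`. -/
def cotype (q : ℝ) {X Y : Type*} [NormedAddCommGroup X] [NormedSpace ℝ X]
    [NormedAddCommGroup Y] [NormedSpace ℝ Y] (T : X →L[ℝ] Y) : ℝ≥0∞ :=
  ⨆ n : ℕ, cotypeN q n T

/-!
A family `x` in an `n`-dimensional space is determined by the orthogonal projection onto the
orthogonal complement of its linear relations, a projection of rank at most `n`. The one-sided
sparsification of Batson, Spielman and Srivastava applied to this projection selects at most `n`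
of the vectors, with weights, such that `∑ ‖T x k‖ ^ 2` is kept up to a factor `4` while the
covariance does not grow, so that neither does the Gaussian average. In dimension `n` Gaussian and
Rademacher averages of second order differ by a factor `O(1 + log n)`: truncate the Gaussian
coefficients at height `√(1 + 4 log n)` and absorb the remainder by comparison with a Euclidean
norm. Hölder's inequality for `n` vectors then gives
`∑ ‖T x k‖ ^ 2 ≤ O(1 + log n) * n ^ (1 - 2 / q) * C ^ 2` with `C = C_q^m(T)`, whenever `x` has
Rademacher average at most one and `m ≥ n`.

Cut the sequence `‖T x k‖` at height `C / m ^ (1 / q)`. At most `m` terms are larger, and they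
contribute at most `C ^ q` to `∑ ‖T x k‖ ^ q`; the smaller ones contribute at most `C ^ q` by the
bound on the squares, provided that `m ^ (1 - 2 / q)` dominates `O(1 + log n) * n ^ (1 - 2 / q)`.
-/

section Rademacher

variable {ι κ : Type*} [Fintype ι] [DecidableEq ι] [Fintype κ] [DecidableEq κ]
  {X : Type*} [NormedAddCommGroup X]

/-- The second moment of the Rademacher sum `∑ k, ε k • x k` of a finite family `x`. Signs are
units of `ℤ`, so that changing the signs of `x` is a translation of the group `ι → ℤˣ`. -/
def rademacherAvg (x : ι → X) : ℝ :=
  𝔼 ε : ι → ℤˣ, ‖∑ k, ε k • x k‖ ^ 2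

lemma rademacherAvg_nonneg (x : ι → X) : 0 ≤ rademacherAvg x :=
  Finset.expect_nonneg fun _ _ => sq_nonneg _

lemma rademacherAvg_add_le (x y : ι → X) :
    rademacherAvg (fun k => x k + y k) ≤ 2 * (rademacherAvg x + rademacherAvg y) := by
  simp only [rademacherAvg, ← Finset.expect_add_distrib, Finset.mul_expect, smul_add,
    Finset.sum_add_distrib]
  gcongr with ε
  calc ‖∑ k, ε k • x k + ∑ k, ε k • y k‖ ^ 2
      ≤ (‖∑ k, ε k • x k‖ + ‖∑ k, ε k • y k‖) ^ 2 := by gcongr; exact norm_add_le _ _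
    _ ≤ 2 * (‖∑ k, ε k • x k‖ ^ 2 + ‖∑ k, ε k • y k‖ ^ 2) := add_sq_le

lemma rademacherAvg_units_smul (σ : ι → ℤˣ) (x : ι → X) :
    rademacherAvg (fun k => σ k • x k) = rademacherAvg x :=
  Fintype.expect_equiv (Equiv.mulRight σ) _ _ fun ε => by simp [mul_smul]

lemma rademacherAvg_comp_equiv (e : ι ≃ κ) (x : κ → X) :
    rademacherAvg (x ∘ e) = rademacherAvg x := by
  refine Fintype.expect_equiv (e.arrowCongr (Equiv.refl ℤˣ)) _ _ fun ε => ?_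
  rw [← e.sum_comp]
  simp

lemma rademacherAvg_sumElim_zero (x : ι → X) :
    rademacherAvg (Sum.elim x fun _ : κ => (0 : X)) = rademacherAvg x := by
  simp only [rademacherAvg]
  rw [Fintype.expect_equiv (Equiv.sumArrowEquivProdArrow ι κ ℤˣ) _
    (fun p : (ι → ℤˣ) × (κ → ℤˣ) => ‖∑ k, p.1 k • x k‖ ^ 2)
    fun ε => by simp [Equiv.sumArrowEquivProdArrow], ← Finset.univ_product_univ,
    Finset.expect_product]
  simp only [Fintype.expect_const]

section NormedSpace

variable [NormedSpace ℝ X]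

lemma sum_bool_eq_sum_intUnits (n : ℕ) (F : (Fin n → ℝ) → ℝ) :
    ∑ ε : Fin n → Bool, F (fun k => if ε k then 1 else -1) =
      ∑ ε : Fin n → ℤˣ, F fun k => ((ε k : ℤ) : ℝ) := by
  have hbij : Function.Bijective fun b : Bool => if b then (1 : ℤˣ) else -1 := by decide
  refine Fintype.sum_equiv ((Equiv.refl _).arrowCongr (Equiv.ofBijective _ hbij)) _ _ fun ε => ?_
  congr 1
  ext k
  cases h : ε k <;> simp [h]

lemma radAvg_eq_rademacherAvg {n : ℕ} (x : Fin n → X) : radAvg x = rademacherAvg x := by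
  rw [radAvg, rademacherAvg, Fintype.expect_eq_sum_div_card,
    sum_bool_eq_sum_intUnits n fun a => ‖∑ k, a k • x k‖ ^ 2]
  simp [Units.smul_def, Int.cast_smul_eq_zsmul]

lemma rademacherAvg_smul (c : ℝ) (x : ι → X) :
    rademacherAvg (fun k => c • x k) = c ^ 2 * rademacherAvg x := by
  simp only [rademacherAvg, Finset.mul_expect, smul_comm _ c, ← Finset.smul_sum, norm_smul,
    mul_pow, Real.norm_eq_abs, sq_abs]

lemma rademacherAvg_map_le_map {Y Z : Type*} [NormedAddCommGroup Y] [NormedSpace ℝ Y]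
    [NormedAddCommGroup Z] [NormedSpace ℝ Z] (f : X →ₗ[ℝ] Y) (g : X →ₗ[ℝ] Z) {c : ℝ}
    (hfg : ∀ z, ‖f z‖ ^ 2 ≤ c * ‖g z‖ ^ 2) (x : ι → X) :
    rademacherAvg (fun k => f (x k)) ≤ c * rademacherAvg fun k => g (x k) := by
  simp only [rademacherAvg, Finset.mul_expect, Units.smul_def, ← map_zsmul, ← map_sum]
  gcongr
  exact hfg _

lemma convexOn_norm_sq : ConvexOn ℝ Set.univ fun z : X => ‖z‖ ^ 2 :=
  convexOn_univ_norm.pow (fun _ _ => norm_nonneg _) 2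

lemma convexOn_rademacherAvg_smul (x : ι → X) :
    ConvexOn ℝ Set.univ fun c : ι → ℝ => rademacherAvg fun k => c k • x k := by
  refine ⟨convex_univ, fun c _ d _ a b ha hb hab => ?_⟩
  simp only [rademacherAvg, smul_eq_mul, Finset.mul_expect, ← Finset.expect_add_distrib]
  gcongr with ε
  refine le_trans (le_of_eq ?_) (convexOn_norm_sq.2 (Set.mem_univ (∑ k, ε k • c k • x k))
    (Set.mem_univ (∑ k, ε k • d k • x k)) ha hb hab)
  congr 2
  simp only [Finset.smul_sum, ← Finset.sum_add_distrib, smul_comm _ (ε _), ← smul_add, smul_smul,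
    ← add_smul, Pi.add_apply, Pi.smul_apply, smul_eq_mul]

/-- The contraction principle: a convex function on a cube is largest at a vertex, and the vertices
only change signs. -/
lemma rademacherAvg_smul_le_of_abs_le_one (c : ι → ℝ) (hc : ∀ k, |c k| ≤ 1) (x : ι → X) :
    rademacherAvg (fun k => c k • x k) ≤ rademacherAvg x := by
  have hmem : c ∈ convexHull ℝ (Set.univ.pi fun _ : ι => ({-1, 1} : Set ℝ)) := by
    rw [convexHull_pi]
    intro k _
    rw [convexHull_pair, segment_eq_Icc (by norm_num)]
    exact abs_le.1 (hc k)
  obtain ⟨v, hv, hcv⟩ :=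
    (convexOn_rademacherAvg_smul x).exists_ge_of_mem_convexHull (Set.subset_univ _) hmem
  have hsign : ∀ k, ∃ u : ℤˣ, v k • x k = u • x k := fun k => by
    rcases hv k (Set.mem_univ k) with h | h
    · exact ⟨-1, by simp [h]⟩
    · exact ⟨1, by rw [Set.mem_singleton_iff.1 h, one_smul, one_smul]⟩
  choose σ hσ using hsign
  simpa only [hσ, rademacherAvg_units_smul] using hcv

lemma rademacherAvg_smul_le_of_abs_le {t : ℝ} (c : ι → ℝ) (hc : ∀ k, |c k| ≤ t)
    (x : ι → X) : rademacherAvg (fun k => c k • x k) ≤ t ^ 2 * rademacherAvg x := by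
  rw [← rademacherAvg_smul]
  refine le_of_eq_of_le ?_ (rademacherAvg_smul_le_of_abs_le_one (fun k => c k / t) (fun k => ?_) _)
  · congr 1
    ext k
    rcases eq_or_ne t 0 with rfl | ht
    · simp [abs_nonpos_iff.1 (hc k)]
    · rw [smul_smul, div_mul_cancel₀ _ ht]
  · have ht : 0 ≤ t := (abs_nonneg _).trans (hc k)
    rw [abs_div, abs_of_nonneg ht]
    exact div_le_one_of_le₀ (hc k) ht

lemma rademacherAvg_subtype_le (x : ι → X) (B : Finset ι) :
    rademacherAvg (fun k : B => x k) ≤ rademacherAvg x := by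
  have hcontr := rademacherAvg_smul_le_of_abs_le_one (fun k => if k ∈ B then (1 : ℝ) else 0)
    (fun k => by split_ifs <;> simp) x
  rw [← rademacherAvg_comp_equiv (Equiv.sumCompl (· ∈ B))] at hcontr
  refine le_of_eq_of_le ?_ hcontr
  rw [← rademacherAvg_sumElim_zero (κ := {k // k ∉ B})]
  congr 1
  ext (k | k) <;> simp [k.2]

lemma exists_fin_family_of_card_le (x : ι → X) {B : Finset ι} {m : ℕ} (hB : B.card ≤ m) :
    ∃ y : Fin m → X, radAvg y ≤ rademacherAvg x ∧
      ∀ φ : X → ℝ, φ 0 = 0 → ∑ k, φ (y k) = ∑ k ∈ B, φ (x k) := by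
  have hcard : Fintype.card (B ⊕ Fin (m - B.card)) = Fintype.card (Fin m) := by
    simp only [Fintype.card_sum, Fintype.card_coe, Fintype.card_fin]
    lia
  let e := Fintype.equivOfCardEq hcard
  let padded : B ⊕ Fin (m - B.card) → X := Sum.elim (fun k => x k) fun _ => 0
  refine ⟨padded ∘ e.symm, ?_, fun φ hφ => ?_⟩
  · rw [radAvg_eq_rademacherAvg, rademacherAvg_comp_equiv, rademacherAvg_sumElim_zero]
    exact rademacherAvg_subtype_le x B
  · simp only [Function.comp_apply]
    rw [e.symm.sum_comp fun k => φ (padded k)]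
    simp [padded, hφ, Finset.sum_attach B fun k => φ (x k)]

end NormedSpace

section InnerProductSpace

variable {H : Type*} [NormedAddCommGroup H] [InnerProductSpace ℝ H]

lemma expect_units_mul_units {k l : ι} (hkl : k ≠ l) :
    𝔼 ε : ι → ℤˣ, (((ε k * ε l : ℤˣ) : ℤ) : ℝ) = 0 := by
  have hflip := Fintype.expect_equiv (Equiv.mulRight (Pi.mulSingle k (-1 : ℤˣ)))
    (fun ε : ι → ℤˣ => (((ε k * ε l : ℤˣ) : ℤ) : ℝ)) (fun ε => -(((ε k * ε l : ℤˣ) : ℤ) : ℝ))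
    fun ε => by simp [hkl.symm]
  rw [Finset.expect_neg_distrib] at hflip
  linarith

lemma rademacherAvg_eq_sum_norm_sq (x : ι → H) : rademacherAvg x = ∑ k, ‖x k‖ ^ 2 := by
  have hinner (ε : ι → ℤˣ) (k l : ι) : inner ℝ (ε k • x k) (ε l • x l) =
      (((ε k * ε l : ℤˣ) : ℤ) : ℝ) * inner ℝ (x k) (x l) := by
    simp only [Units.smul_def, ← Int.cast_smul_eq_zsmul ℝ, real_inner_smul_left,
      real_inner_smul_right, Units.val_mul, Int.cast_mul]
    ring
  simp only [rademacherAvg, ← real_inner_self_eq_norm_sq, sum_inner, inner_sum, hinner]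
  simp only [Finset.expect_sum_comm, ← Finset.expect_mul]
  refine Finset.sum_congr rfl fun k _ => ?_
  rw [Finset.sum_eq_single k (fun l _ hl => by rw [expect_units_mul_units hl, zero_mul]) (by simp)]
  simp

end InnerProductSpace

end Rademacher

section Auerbach

open Module

variable {E : Type*} [NormedAddCommGroup E] [NormedSpace ℝ E]

lemma basis_det_update_self {R M ι : Type*} [CommRing R] [AddCommGroup M] [Module R M] [Fintype ι]
    [DecidableEq ι] (e : Basis ι R M) (i : ι) (z : M) :
    e.det (Function.update e i z) = e.repr z i := by
  rw [e.det_apply, e.toMatrix_update, e.toMatrix_self, ← Matrix.cramer_apply, Matrix.cramer_one,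
    Module.End.one_apply]

lemma continuous_basis_det {ι : Type*} [Fintype ι] [DecidableEq ι] (b : Basis ι ℝ E) :
    Continuous b.det := by
  have := b.finiteDimensional_of_finite
  refine Continuous.matrix_det (continuous_pi fun i => continuous_pi fun j => ?_)
  exact (b.coord i).continuous_of_finiteDimensional.comp (continuous_apply j)

/-- Auerbach's argument: take vectors of the unit ball spanning a parallelepiped of maximal
volume. -/
lemma exists_basis_abs_det_le_one {ι : Type*} [Fintype ι] [DecidableEq ι] (b : Basis ι ℝ E) :
    ∃ e : Basis ι ℝ E, (∀ i, ‖e i‖ ≤ 1) ∧ ∀ v : ι → E, (∀ i, ‖v i‖ ≤ 1) → |e.det v| ≤ 1 := by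
  have := b.finiteDimensional_of_finite
  have := FiniteDimensional.proper ℝ E
  let u : Basis ι ℝ E :=
    b.isUnitSMul fun i => (inv_ne_zero (norm_ne_zero_iff.2 (b.ne_zero i))).isUnit
  have hu : ∀ i, ‖u i‖ ≤ 1 := fun i => by
    rw [b.isUnitSMul_apply, norm_smul, norm_inv, norm_norm,
      inv_mul_cancel₀ (norm_ne_zero_iff.2 (b.ne_zero i))]
  have hcompact : IsCompact (Set.univ.pi fun _ : ι => Metric.closedBall (0 : E) 1) :=
    isCompact_univ_pi fun _ => isCompact_closedBall _ _
  obtain ⟨v, hv, hmax⟩ := hcompact.exists_isMaxOn ⟨u, fun i _ => by simpa using hu i⟩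
    (continuous_basis_det u).abs.continuousOn
  have hmax' : ∀ w : ι → E, (∀ i, ‖w i‖ ≤ 1) → |u.det w| ≤ |u.det v| := fun w hw =>
    hmax fun i _ => by simpa using hw i
  have hpos : 0 < |u.det v| := by
    have := hmax' u hu
    rw [u.det_self, abs_one] at this
    linarith
  obtain ⟨hli, hspan⟩ := u.is_basis_iff_det.2 (abs_pos.1 hpos).isUnit
  refine ⟨Basis.mk hli hspan.ge, fun i => by simpa using hv i (Set.mem_univ i), fun w hw => ?_⟩
  have hdet : u.det w = u.det v * (Basis.mk hli hspan.ge).det w := by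
    conv_lhs => rw [AlternatingMap.eq_smul_basis_det (Basis.mk hli hspan.ge) u.det, Basis.coe_mk]
    rfl
  have hle := hmax' w hw
  rw [hdet, abs_mul] at hle
  exact (mul_le_iff_le_one_right hpos).1 hle

lemma exists_auerbach_basis {ι : Type*} [Finite ι] (b : Basis ι ℝ E) :
    ∃ e : Basis ι ℝ E, (∀ i, ‖e i‖ ≤ 1) ∧ ∀ i z, |e.repr z i| ≤ ‖z‖ := by
  classical
  have := Fintype.ofFinite ι
  obtain ⟨e, he, hdet⟩ := exists_basis_abs_det_le_one b
  refine ⟨e, he, fun i z => ?_⟩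
  rcases eq_or_ne z 0 with rfl | hz
  · simp
  have hz' : 0 < ‖z‖ := norm_pos_iff.2 hz
  have hle : |e.repr (‖z‖⁻¹ • z) i| ≤ 1 := by
    rw [← basis_det_update_self]
    refine hdet _ fun j => ?_
    rcases eq_or_ne j i with rfl | hj
    · rw [Function.update_self, norm_smul, norm_inv, norm_norm, inv_mul_cancel₀ hz'.ne']
    · rw [Function.update_of_ne hj]
      exact he j
  rwa [map_smul, Finsupp.smul_apply, smul_eq_mul, abs_mul, abs_inv, abs_norm,
    inv_mul_le_iff₀ hz', mul_one] at hle

lemma exists_linearMap_euclideanSpace_norm_sq_le [FiniteDimensional ℝ E] :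
    ∃ A : E →ₗ[ℝ] EuclideanSpace ℝ (Fin (finrank ℝ E)),
      (∀ z, ‖A z‖ ^ 2 ≤ finrank ℝ E * ‖z‖ ^ 2) ∧ ∀ z, ‖z‖ ^ 2 ≤ finrank ℝ E * ‖A z‖ ^ 2 := by
  obtain ⟨e, he, hcoord⟩ := exists_auerbach_basis (finBasis ℝ E)
  let A : E →ₗ[ℝ] EuclideanSpace ℝ (Fin (finrank ℝ E)) :=
    (e.equivFun ≪≫ₗ (WithLp.linearEquiv 2 ℝ _).symm : E ≃ₗ[ℝ] _)
  have hA : ∀ z, ‖A z‖ ^ 2 = ∑ i, e.repr z i ^ 2 := fun z => by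
    simp [A, EuclideanSpace.norm_sq_eq]
  refine ⟨A, fun z => ?_, fun z => ?_⟩
  · rw [hA]
    calc ∑ i, e.repr z i ^ 2
        ≤ ∑ _ : Fin (finrank ℝ E), ‖z‖ ^ 2 := Finset.sum_le_sum fun i _ => by
          simpa using sq_le_sq₀ (abs_nonneg _) (norm_nonneg z) |>.2 (hcoord i z)
      _ = finrank ℝ E * ‖z‖ ^ 2 := by simp
  · have hnorm : ‖z‖ ≤ ∑ i, |e.repr z i| := by
      conv_lhs => rw [← e.sum_repr z]
      refine (norm_sum_le _ _).trans (Finset.sum_le_sum fun i _ => ?_)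
      rw [norm_smul, Real.norm_eq_abs]
      exact mul_le_of_le_one_right (abs_nonneg _) (he i)
    calc ‖z‖ ^ 2 ≤ (∑ i, |e.repr z i|) ^ 2 := by gcongr
      _ ≤ finrank ℝ E * ∑ i, |e.repr z i| ^ 2 := by
          simpa using sq_sum_le_card_mul_sum_sq (s := Finset.univ) (f := fun i => |e.repr z i|)
      _ = finrank ℝ E * ‖A z‖ ^ 2 := by simp only [sq_abs, hA]

end Auerbach

section Sparsification

open Matrix

variable {ι κ : Type*} [Fintype κ]

lemma exists_mul_le_one_and_div_le_mul {U a : κ → ℝ} {c : ℝ} (hc : 0 < c) (hU : ∀ k, 0 ≤ U k)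
    (hUc : ∑ k, U k ≤ c) (ha : 0 < ∑ k, a k) :
    ∃ k t, 0 ≤ t ∧ t * U k ≤ 1 ∧ (∑ k, a k) / c ≤ t * a k := by
  set A := ∑ k, a k with hA
  have hAc : 0 < A / c := div_pos ha hc
  obtain ⟨k, hak, hUk⟩ : ∃ k, 0 < a k ∧ A / c * U k ≤ a k := by
    by_contra! h
    obtain ⟨k, -, hk⟩ := Finset.exists_lt_of_sum_lt (s := Finset.univ) (f := 0) (g := a)
      (by simpa using ha)
    have hlt : A < ∑ k, A / c * U k := by
      rw [hA]
      refine Finset.sum_lt_sum (fun j _ => ?_) ⟨k, Finset.mem_univ k, h k hk⟩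
      rcases le_or_gt (a j) 0 with hj | hj
      · exact hj.trans (mul_nonneg hAc.le (hU j))
      · exact (h j hj).le
    rw [← Finset.mul_sum] at hlt
    have hle := mul_le_mul_of_nonneg_left hUc hAc.le
    rw [div_mul_cancel₀ A hc.ne'] at hle
    exact hlt.not_ge hle
  refine ⟨k, A / c / a k, by positivity, ?_, (div_mul_cancel₀ _ hak.ne').ge⟩
  rw [div_mul_eq_mul_div]
  exact div_le_one_of_le₀ hUk hak.le

lemma mul_diagonal_single_mul_transpose [DecidableEq κ] (V : Matrix ι κ ℝ) (k : κ) (t : ℝ) :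
    V * diagonal (Pi.single k t) * Vᵀ = t • vecMulVec (V.col k) (V.col k) := by
  ext i j
  rw [mul_apply]
  simp [mul_diagonal, vecMulVec_apply, Pi.single_apply, mul_left_comm, mul_assoc]

variable [Fintype ι] [DecidableEq ι]

lemma trace_inv_add_one_sq_le {B : Matrix ι ι ℝ} (hB : B.PosDef) :
    ((B + 1)⁻¹ * (B + 1)⁻¹).trace ≤ B⁻¹.trace - (B + 1)⁻¹.trace := by
  have hC : (B + 1).PosDef := hB.add PosDef.one
  set M := (B + 1)⁻¹
  have hresolvent : B⁻¹ = M + M * B⁻¹ := by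
    calc B⁻¹ = M * (B + 1) * B⁻¹ := by
          rw [nonsing_inv_mul _ ((isUnit_iff_isUnit_det _).1 hC.isUnit), one_mul]
      _ = M * (B * B⁻¹) + M * B⁻¹ := by noncomm_ring
      _ = M + M * B⁻¹ := by
          rw [mul_nonsing_inv _ ((isUnit_iff_isUnit_det _).1 hB.isUnit), mul_one]
  have hexpand : B⁻¹ = M + M * M + M * (M * B⁻¹) := by
    conv_lhs => rw [hresolvent, hresolvent]
    noncomm_ring
  have hnonneg : 0 ≤ (M * (M * B⁻¹)).trace := by
    have h := hB.inv.posSemidef.mul_mul_conjTranspose_same M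
    rw [hC.inv.isHermitian.eq] at h
    rw [trace_mul_comm]
    exact h.trace_nonneg
  have htrace := congrArg trace hexpand
  rw [trace_add, trace_add] at htrace
  linarith

lemma sq_dotProduct_le_of_posDef {C : Matrix ι ι ℝ} (hC : C.PosDef) (v z : ι → ℝ) :
    (v ⬝ᵥ z) ^ 2 ≤ (v ⬝ᵥ C⁻¹ *ᵥ v) * (z ⬝ᵥ C *ᵥ z) := by
  have hCinv : C *ᵥ C⁻¹ *ᵥ v = v := by
    rw [mulVec_mulVec, mul_nonsing_inv _ ((isUnit_iff_isUnit_det _).1 hC.isUnit), one_mulVec]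
  have hnonneg : ∀ w, 0 ≤ C.toBilin' w w := fun w => by
    simpa [toBilin'_apply'] using hC.posSemidef.dotProduct_mulVec_nonneg w
  have hsymm : LinearMap.IsSymm C.toBilin' := ⟨fun w u => by
    have hT : Cᵀ = C := hC.isHermitian.eq
    rw [RingHom.id_apply, toBilin'_apply', toBilin'_apply', dotProduct_mulVec, ← mulVec_transpose,
      hT, dotProduct_comm]⟩
  have h := (C.toBilin').apply_sq_le_of_symm hnonneg hsymm z (C⁻¹ *ᵥ v)
  simp only [toBilin'_apply', hCinv] at h
  rw [dotProduct_comm v z, dotProduct_comm v (C⁻¹ *ᵥ v), mul_comm]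
  exact h

lemma posDef_sub_smul_vecMulVec {C : Matrix ι ι ℝ} (hC : C.PosDef) {v : ι → ℝ} {t : ℝ}
    (ht : 0 ≤ t) (hv : t * (v ⬝ᵥ C⁻¹ *ᵥ v) < 1) : (C - t • vecMulVec v v).PosDef := by
  refine PosDef.of_dotProduct_mulVec_pos ?_ fun z hz => ?_
  · refine hC.isHermitian.sub ?_
    rw [IsHermitian, conjTranspose_eq_transpose_of_trivial, transpose_smul, transpose_vecMulVec]
  have hCz : 0 < z ⬝ᵥ C *ᵥ z := by simpa using hC.dotProduct_mulVec_pos hz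
  have hrank : z ⬝ᵥ vecMulVec v v *ᵥ z = (v ⬝ᵥ z) ^ 2 := by
    rw [vecMulVec_mulVec, op_smul_eq_smul, dotProduct_smul, dotProduct_comm z, smul_eq_mul, sq]
  rw [star_trivial, sub_mulVec, smul_mulVec, dotProduct_sub, dotProduct_smul, hrank, smul_eq_mul]
  linarith [mul_le_mul_of_nonneg_left (sq_dotProduct_le_of_posDef hC v z) ht,
    mul_lt_mul_of_pos_right hv hCz]

lemma inv_sub_smul_vecMulVec {C : Matrix ι ι ℝ} (hC : C.IsSymm) (hdet : IsUnit C.det) {v : ι → ℝ}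
    {t : ℝ} (hv : 1 - t * (v ⬝ᵥ C⁻¹ *ᵥ v) ≠ 0) :
    (C - t • vecMulVec v v)⁻¹ =
      C⁻¹ + (t / (1 - t * (v ⬝ᵥ C⁻¹ *ᵥ v))) • vecMulVec (C⁻¹ *ᵥ v) (C⁻¹ *ᵥ v) := by
  set β := v ⬝ᵥ C⁻¹ *ᵥ v
  have hCinv : C *ᵥ C⁻¹ *ᵥ v = v := by
    rw [mulVec_mulVec, mul_nonsing_inv _ hdet, one_mulVec]
  have hvC : v ᵥ* C⁻¹ = C⁻¹ *ᵥ v := by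
    rw [← mulVec_transpose, transpose_nonsing_inv, hC.eq]
  refine inv_eq_right_inv ?_
  rw [sub_mul, mul_add, mul_add, mul_nonsing_inv _ hdet, mul_smul_comm, mul_vecMulVec, hCinv,
    smul_mul_assoc, smul_mul_assoc, mul_smul_comm, vecMulVec_mul, vecMulVec_mul_vecMulVec, hvC,
    vecMulVec_smul]
  have hcoeff : t / (1 - t * β) - t - t * (t / (1 - t * β)) * β = 0 := by
    field_simp
    ring
  linear_combination (norm := module) hcoeff • vecMulVec v (C⁻¹ *ᵥ v)

lemma trace_inv_sub_smul_vecMulVec {C : Matrix ι ι ℝ} (hC : C.IsSymm) (hdet : IsUnit C.det)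
    {v : ι → ℝ} {t : ℝ} (hv : 1 - t * (v ⬝ᵥ C⁻¹ *ᵥ v) ≠ 0) :
    (C - t • vecMulVec v v)⁻¹.trace =
      C⁻¹.trace + t * (v ⬝ᵥ (C⁻¹ * C⁻¹) *ᵥ v) / (1 - t * (v ⬝ᵥ C⁻¹ *ᵥ v)) := by
  have hsq : v ⬝ᵥ (C⁻¹ * C⁻¹) *ᵥ v = (C⁻¹ *ᵥ v) ⬝ᵥ (C⁻¹ *ᵥ v) := by
    rw [← mulVec_mulVec, dotProduct_mulVec, ← mulVec_transpose, transpose_nonsing_inv, hC.eq]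
  rw [inv_sub_smul_vecMulVec hC hdet hv, trace_add, trace_smul, trace_vecMulVec, smul_eq_mul,
    hsq, div_mul_eq_mul_div]

/-- The weight of a rank one update in the barrier argument of Batson, Spielman and Srivastava:
after the barrier has moved by one, `t • vecMulVec v v` may be subtracted from `B + 1` without
increasing the trace of the inverse as soon as `t * barrierCost B v ≤ 1`. -/
def barrierCost (B : Matrix ι ι ℝ) (v : ι → ℝ) : ℝ :=
  (v ⬝ᵥ ((B + 1)⁻¹ * (B + 1)⁻¹) *ᵥ v) / (B⁻¹.trace - (B + 1)⁻¹.trace) + v ⬝ᵥ (B + 1)⁻¹ *ᵥ v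

lemma posDef_inv_mul_inv {C : Matrix ι ι ℝ} (hC : C.PosDef) : (C⁻¹ * C⁻¹).PosDef := by
  have h := PosDef.conjTranspose_mul_self C⁻¹ (mulVec_injective_of_isUnit hC.inv.isUnit)
  rwa [hC.inv.isHermitian.eq] at h

lemma trace_inv_sub_trace_inv_add_one_pos [Nonempty ι] {B : Matrix ι ι ℝ} (hB : B.PosDef) :
    0 < B⁻¹.trace - (B + 1)⁻¹.trace :=
  (posDef_inv_mul_inv (hB.add PosDef.one)).trace_pos.trans_le (trace_inv_add_one_sq_le hB)

lemma barrierCost_nonneg [Nonempty ι] {B : Matrix ι ι ℝ} (hB : B.PosDef) (v : ι → ℝ) :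
    0 ≤ barrierCost B v := by
  have hC : (B + 1).PosDef := hB.add PosDef.one
  refine add_nonneg (div_nonneg ?_ (trace_inv_sub_trace_inv_add_one_pos hB).le) ?_
  · simpa using (posDef_inv_mul_inv hC).posSemidef.dotProduct_mulVec_nonneg v
  · simpa using hC.inv.posSemidef.dotProduct_mulVec_nonneg v

lemma mul_inv_quadForm_lt_one [Nonempty ι] {B : Matrix ι ι ℝ} (hB : B.PosDef) {v : ι → ℝ} {t : ℝ}
    (ht : 0 ≤ t) (hv : t * barrierCost B v ≤ 1) : t * (v ⬝ᵥ (B + 1)⁻¹ *ᵥ v) < 1 := by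
  rcases ht.eq_or_lt with rfl | ht
  · simp
  rcases eq_or_ne v 0 with rfl | hv0
  · simp
  have hα : 0 < v ⬝ᵥ ((B + 1)⁻¹ * (B + 1)⁻¹) *ᵥ v := by
    simpa using (posDef_inv_mul_inv (hB.add PosDef.one)).dotProduct_mulVec_pos hv0
  rw [barrierCost, mul_add] at hv
  linarith [mul_pos ht (div_pos hα (trace_inv_sub_trace_inv_add_one_pos hB))]

lemma posDef_and_trace_inv_le_of_barrierCost [Nonempty ι] {B : Matrix ι ι ℝ} (hB : B.PosDef)
    {v : ι → ℝ} {t : ℝ} (ht : 0 ≤ t) (hv : t * barrierCost B v ≤ 1) :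
    (B + 1 - t • vecMulVec v v).PosDef ∧ (B + 1 - t • vecMulVec v v)⁻¹.trace ≤ B⁻¹.trace := by
  have hC : (B + 1).PosDef := hB.add PosDef.one
  have hΔ := trace_inv_sub_trace_inv_add_one_pos hB
  have hβ := mul_inv_quadForm_lt_one hB ht hv
  have hsymm : (B + 1).IsSymm := hC.isHermitian.eq
  refine ⟨posDef_sub_smul_vecMulVec hC ht hβ, ?_⟩
  rw [trace_inv_sub_smul_vecMulVec hsymm ((isUnit_iff_isUnit_det _).1 hC.isUnit)
    (sub_pos.2 hβ).ne', ← le_sub_iff_add_le', div_le_iff₀ (sub_pos.2 hβ)]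
  calc t * (v ⬝ᵥ ((B + 1)⁻¹ * (B + 1)⁻¹) *ᵥ v)
      = (B⁻¹.trace - (B + 1)⁻¹.trace) *
          (t * barrierCost B v - t * (v ⬝ᵥ (B + 1)⁻¹ *ᵥ v)) := by
        rw [barrierCost]
        field_simp
        ring
    _ ≤ _ := by gcongr

lemma sum_col_quadForm_eq_trace {V : Matrix ι κ ℝ} (hV : V * Vᵀ = 1) (M : Matrix ι ι ℝ) :
    ∑ k, V.col k ⬝ᵥ M *ᵥ V.col k = M.trace := by
  calc ∑ k, V.col k ⬝ᵥ M *ᵥ V.col k = (Vᵀ * (M * V)).trace := rfl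
    _ = M.trace := by rw [trace_mul_comm, Matrix.mul_assoc, hV, mul_one]

lemma sum_barrierCost_le_two [Nonempty ι] {B : Matrix ι ι ℝ} (hB : B.PosDef)
    (hBtr : B⁻¹.trace ≤ 1) {V : Matrix ι κ ℝ} (hV : V * Vᵀ = 1) :
    ∑ k, barrierCost B (V.col k) ≤ 2 := by
  have hΔ := trace_inv_sub_trace_inv_add_one_pos hB
  simp only [barrierCost, Finset.sum_add_distrib, ← Finset.sum_div, sum_col_quadForm_eq_trace hV]
  linarith [(div_le_one hΔ).2 (trace_inv_add_one_sq_le hB)]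

variable [DecidableEq κ]

lemma exists_sparse_weights_barrier [Nonempty ι] {V : Matrix ι κ ℝ} (hV : V * Vᵀ = 1) {a : κ → ℝ}
    (ha : 0 < ∑ k, a k) (j : ℕ) :
    ∃ (B : Finset κ) (s : κ → ℝ), B.card ≤ j ∧ (∀ k ∉ B, s k = 0) ∧ 0 ≤ s ∧
      ((Fintype.card ι + j : ℝ) • 1 - V * diagonal s * Vᵀ).PosDef ∧
      ((Fintype.card ι + j : ℝ) • 1 - V * diagonal s * Vᵀ)⁻¹.trace ≤ 1 ∧
      j * ((∑ k, a k) / 2) ≤ ∑ k, s k * a k := by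
  have hcard : (0 : ℝ) < Fintype.card ι := by exact_mod_cast Fintype.card_pos
  induction j with
  | zero =>
    refine ⟨∅, 0, by simp, by simp, le_rfl, ?_, ?_, by simp⟩
    · simpa using PosDef.one.smul hcard
    · have hinv : ((Fintype.card ι : ℝ) • (1 : Matrix ι ι ℝ))⁻¹ = (Fintype.card ι : ℝ)⁻¹ • 1 :=
        inv_eq_right_inv (by rw [smul_mul_smul_comm, mul_inv_cancel₀ hcard.ne', one_mul, one_smul])
      simp [hinv, hcard.ne']
  | succ j ih =>
    obtain ⟨B, s, hB, hsB, hs, hpos, htrace, hsum⟩ := ih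
    obtain ⟨k, t, ht, htk, hak⟩ := exists_mul_le_one_and_div_le_mul two_pos
      (fun k => barrierCost_nonneg hpos (V.col k)) (sum_barrierCost_le_two hpos htrace hV) ha
    obtain ⟨hpos', htrace'⟩ := posDef_and_trace_inv_le_of_barrierCost hpos ht htk
    have hdiag : diagonal (s + Pi.single k t) = diagonal s + diagonal (Pi.single k t) :=
      (diagonal_add _ _).symm
    have hupdate : (Fintype.card ι + (j + 1 : ℕ) : ℝ) • 1 - V * diagonal (s + Pi.single k t) * Vᵀ =
        (Fintype.card ι + j : ℝ) • 1 - V * diagonal s * Vᵀ + 1 -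
          t • vecMulVec (V.col k) (V.col k) := by
      rw [← mul_diagonal_single_mul_transpose, hdiag, Matrix.mul_add, Matrix.add_mul]
      push_cast
      module
    refine ⟨insert k B, s + Pi.single k t, (Finset.card_insert_le _ _).trans (by lia),
      fun l hl => ?_, add_nonneg hs (Pi.single_nonneg.2 ht),
      hupdate ▸ hpos', hupdate ▸ htrace'.trans htrace, ?_⟩
    · rw [Finset.mem_insert, not_or] at hl
      simp [hsB l hl.2, Pi.single_eq_of_ne hl.1]
    · simp only [Pi.add_apply, add_mul, Finset.sum_add_distrib, Pi.single_apply, ite_mul, zero_mul,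
        Finset.sum_ite_eq', Finset.mem_univ, if_true]
      push_cast
      linarith

lemma exists_sparse_weights {V : Matrix ι κ ℝ} (hV : V * Vᵀ = 1) [Nonempty ι] (a : κ → ℝ) :
    ∃ (B : Finset κ) (s : κ → ℝ), B.card ≤ Fintype.card ι ∧ (∀ k ∉ B, s k = 0) ∧ 0 ≤ s ∧
      (1 - V * diagonal s * Vᵀ).PosSemidef ∧ ∑ k, a k ≤ 4 * ∑ k, s k * a k := by
  rcases le_or_gt (∑ k, a k) 0 with ha | ha
  · exact ⟨∅, 0, by simp, by simp, le_rfl, by simpa using PosSemidef.one, by simpa using ha⟩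
  obtain ⟨B, s, hB, hsB, hs, hpos, -, hsum⟩ := exists_sparse_weights_barrier hV ha (Fintype.card ι)
  set c : ℝ := (Fintype.card ι + Fintype.card ι)⁻¹ with hc
  have hc0 : 0 < c := by positivity
  refine ⟨B, c • s, hB, fun k hk => by simp [hsB k hk], smul_nonneg hc0.le hs, ?_, ?_⟩
  · have h := hpos.posSemidef.smul hc0.le
    rwa [smul_sub, smul_smul, hc, inv_mul_cancel₀ (by positivity), one_smul, ← hc,
      ← Matrix.smul_mul, ← Matrix.mul_smul, ← diagonal_smul] at h
  · simp only [Pi.smul_apply, smul_eq_mul, mul_assoc, ← Finset.mul_sum]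
    rw [hc, ← div_eq_inv_mul, mul_div_assoc', le_div_iff₀ (by positivity)]
    linarith

end Sparsification

section Gaussian

open MeasureTheory ProbabilityTheory Matrix WithLp

variable {ι κ : Type*} [Fintype ι] [Fintype κ] {X : Type*} [NormedAddCommGroup X] [NormedSpace ℝ X]

lemma measurePreserving_eval_stdGaussian (k : ι) :
    MeasurePreserving (fun g : EuclideanSpace ℝ ι => g k) (stdGaussian (EuclideanSpace ℝ ι))
      (gaussianReal 0 1) := by
  classical
  simpa using measurePreserving_eval_multivariateGaussian (μ := (0 : EuclideanSpace ℝ ι))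
    (S := 1) Matrix.PosSemidef.one (i := k)

/-- The second moment of the Gaussian sum `∑ k, g k • x k` of a finite family `x`, where the `g k`
are independent standard normal variables. -/
def gaussianAvg (x : ι → X) : ℝ :=
  ∫ g, ‖∑ k, g k • x k‖ ^ 2 ∂stdGaussian (EuclideanSpace ℝ ι)

lemma integrable_norm_sq_sum_smul (x : ι → X) :
    Integrable (fun g => ‖∑ k, g k • x k‖ ^ 2) (stdGaussian (EuclideanSpace ℝ ι)) := by
  have hsum : MemLp (fun g : EuclideanSpace ℝ ι => ∑ k, g k • x k) 2
      (stdGaussian (EuclideanSpace ℝ ι)) := by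
    refine MemLp.ae_eq (.of_forall fun g => ?_)
      ((∑ k, (EuclideanSpace.proj (𝕜 := ℝ) k).smulRight (x k)).comp_memLp'
        (IsGaussian.memLp_two_id (μ := stdGaussian (EuclideanSpace ℝ ι))))
    simp
  exact (memLp_two_iff_integrable_sq_norm hsum.1).1 hsum

lemma measurePreserving_mulVec_stdGaussian [DecidableEq ι] {Q : Matrix ι κ ℝ} (hQ : Q * Qᵀ = 1) :
    MeasurePreserving (fun g : EuclideanSpace ℝ κ => toLp 2 (Q *ᵥ ofLp g))
      (stdGaussian (EuclideanSpace ℝ κ)) (stdGaussian (EuclideanSpace ℝ ι)) := by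
  have hmeas : Measurable fun g : EuclideanSpace ℝ κ => toLp 2 (Q *ᵥ ofLp g) := by fun_prop
  refine ⟨hmeas, ?_⟩
  have := Measure.isProbabilityMeasure_map (μ := stdGaussian (EuclideanSpace ℝ κ))
    hmeas.aemeasurable
  refine Measure.ext_of_charFun (funext fun t => ?_)
  have hinner (g : EuclideanSpace ℝ κ) :
      inner ℝ (toLp 2 (Q *ᵥ ofLp g)) t = inner ℝ g (toLp 2 (Qᵀ *ᵥ ofLp t)) := by
    simp only [EuclideanSpace.inner_eq_star_dotProduct, star_trivial]
    rw [dotProduct_mulVec, ← mulVec_transpose]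
  have hnorm : ‖toLp 2 (Qᵀ *ᵥ ofLp t)‖ ^ 2 = ‖t‖ ^ 2 := by
    rw [← real_inner_self_eq_norm_sq, ← hinner, mulVec_mulVec, hQ, one_mulVec, toLp_ofLp,
      real_inner_self_eq_norm_sq]
  have hpull : charFun ((stdGaussian (EuclideanSpace ℝ κ)).map
      fun g => toLp 2 (Q *ᵥ ofLp g)) t =
        charFun (stdGaussian (EuclideanSpace ℝ κ)) (toLp 2 (Qᵀ *ᵥ ofLp t)) := by
    rw [charFun_apply, charFun_apply, integral_map hmeas.aemeasurable (by fun_prop)]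
    simp only [hinner]
  rw [hpull, charFun_stdGaussian, charFun_stdGaussian, ← Complex.ofReal_pow,
    ← Complex.ofReal_pow, hnorm]

lemma gaussianAvg_sum_smul [DecidableEq ι] {Q : Matrix ι κ ℝ} (hQ : Q * Qᵀ = 1) (x : ι → X) :
    gaussianAvg (fun i => ∑ k, Q k i • x k) = gaussianAvg x := by
  have hmap := measurePreserving_mulVec_stdGaussian hQ
  rw [gaussianAvg, gaussianAvg, ← hmap.map_eq, integral_map hmap.measurable.aemeasurable
    (Continuous.aestronglyMeasurable (by fun_prop))]
  simp only [mulVec, dotProduct, Finset.smul_sum, Finset.sum_smul, smul_smul, mul_comm]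
  simp only [Finset.sum_comm (s := (Finset.univ : Finset ι))]

lemma gaussianAvg_units_smul (ε : ι → ℤˣ) (x : ι → X) :
    gaussianAvg (fun k => ε k • x k) = gaussianAvg x := by
  classical
  let D : Matrix ι ι ℝ := diagonal fun k => ((ε k : ℤ) : ℝ)
  have hD : D * Dᵀ = 1 := by
    simp only [D, diagonal_transpose, diagonal_mul_diagonal, ← Int.cast_mul, Int.units_coe_mul_self,
      Int.cast_one, diagonal_one]
  rw [← gaussianAvg_sum_smul hD x]
  simp [D, diagonal_apply, Units.smul_def, Int.cast_smul_eq_zsmul]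

lemma integrable_rademacherAvg_smul [DecidableEq ι] (x : ι → X) :
    Integrable (fun g => rademacherAvg fun k => g k • x k)
      (stdGaussian (EuclideanSpace ℝ ι)) := by
  simp only [rademacherAvg, Fintype.expect_eq_sum_div_card, smul_comm (_ : ℤˣ)]
  exact (integrable_finsetSum _ fun ε _ =>
    integrable_norm_sq_sum_smul fun k => ε k • x k).div_const _

/-- A Gaussian vector is symmetric, so its coordinates may be multiplied by independent random
signs. -/
lemma integral_rademacherAvg_smul [DecidableEq ι] (x : ι → X) :
    ∫ g, rademacherAvg (fun k => g k • x k) ∂stdGaussian (EuclideanSpace ℝ ι) =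
      gaussianAvg x := by
  simp only [rademacherAvg, Fintype.expect_eq_sum_div_card, smul_comm (_ : ℤˣ)]
  rw [integral_div, integral_finsetSum _ fun ε _ =>
    integrable_norm_sq_sum_smul fun k => ε k • x k]
  calc (∑ ε : ι → ℤˣ, gaussianAvg fun k => ε k • x k) / Fintype.card (ι → ℤˣ)
      = (∑ _ε : ι → ℤˣ, gaussianAvg x) / Fintype.card (ι → ℤˣ) := by
        simp only [gaussianAvg_units_smul]
    _ = gaussianAvg x := by
        rw [← Fintype.expect_eq_sum_div_card, Fintype.expect_const]

lemma gaussianAvg_le_sumElim (y : ι → X) (z : κ → X) :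
    gaussianAvg y ≤ gaussianAvg (Sum.elim y z) := by
  classical
  have hP : fromCols (1 : Matrix ι ι ℝ) (0 : Matrix ι κ ℝ) *
      (fromCols (1 : Matrix ι ι ℝ) (0 : Matrix ι κ ℝ))ᵀ = 1 := by
    simp [transpose_fromCols, fromCols_mul_fromRows]
  have hpad : gaussianAvg y = gaussianAvg (Sum.elim y fun _ : κ => (0 : X)) := by
    rw [← gaussianAvg_sum_smul hP y]
    congr 1
    ext (i | i) <;> simp [one_apply]
  rw [hpad, ← integral_rademacherAvg_smul, ← integral_rademacherAvg_smul]
  refine integral_mono (integrable_rademacherAvg_smul _) (integrable_rademacherAvg_smul _)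
    fun g => ?_
  have hcontr := rademacherAvg_smul_le_of_abs_le_one
    (Sum.elim (fun _ : ι => (1 : ℝ)) fun _ : κ => 0) (by rintro (i | i) <;> simp)
    fun i => g i • Sum.elim y z i
  refine le_of_eq_of_le ?_ hcontr
  congr 1
  ext (i | i) <;> simp

/-- Gaussian averages are monotone in the covariance. Completing `W` to a matrix with orthonormal
columns exhibits the left-hand family as a subfamily of a rotation of `x`. -/
lemma gaussianAvg_sum_smul_le [DecidableEq ι] {W : Matrix κ ι ℝ}
    (hW : (1 - Wᵀ * W).PosSemidef) (x : ι → X) :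
    gaussianAvg (fun j => ∑ k, W j k • x k) ≤ gaussianAvg x := by
  obtain ⟨m, v, hv⟩ := posSemidef_iff_eq_sum_vecMulVec.1 hW
  let R : Matrix (Fin m) ι ℝ := Matrix.of v
  have hR : Rᵀ * R = 1 - Wᵀ * W := by
    rw [hv]
    ext a b
    simp [R, Matrix.mul_apply, Matrix.sum_apply, vecMulVec_apply]
  have hQ : fromCols Wᵀ Rᵀ * (fromCols Wᵀ Rᵀ)ᵀ = 1 := by
    rw [transpose_fromCols, fromCols_mul_fromRows, transpose_transpose, transpose_transpose, hR,
      add_sub_cancel]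
  calc gaussianAvg (fun j => ∑ k, W j k • x k)
      ≤ gaussianAvg (Sum.elim (fun j => ∑ k, W j k • x k) fun i => ∑ k, R i k • x k) :=
        gaussianAvg_le_sumElim _ _
    _ = gaussianAvg fun i => ∑ k, fromCols Wᵀ Rᵀ k i • x k := by
        congr 1
        ext (i | i) <;> simp
    _ = gaussianAvg x := gaussianAvg_sum_smul hQ x

end Gaussian

section GaussianComparison

open MeasureTheory ProbabilityTheory

variable {ι : Type*} [Fintype ι] {X : Type*} [NormedAddCommGroup X] [NormedSpace ℝ X]

/-- The first absolute moment of a standard normal variable. -/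
def gaussianAbsMoment : ℝ := ∫ s, |s| ∂gaussianReal 0 1

lemma integrable_abs_gaussianReal : Integrable (fun s : ℝ => |s|) (gaussianReal 0 1) :=
  (IsGaussian.integrable_id (μ := gaussianReal 0 1)).abs

lemma gaussianAbsMoment_pos : 0 < gaussianAbsMoment := by
  have := nullSingletonClass_gaussianReal (μ := 0) one_ne_zero
  rw [gaussianAbsMoment,
    integral_pos_iff_support_of_nonneg (fun s => abs_nonneg s) integrable_abs_gaussianReal]
  have hsupport : Function.support (fun s : ℝ => |s|) = {0}ᶜ := by ext s; simp
  rw [hsupport, prob_compl_eq_one_sub (measurableSet_singleton 0), measure_singleton]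
  simp

/-- The part of `s` cut off by truncation to `[-t, t]`. -/
def truncRemainder (t s : ℝ) : ℝ := s - max (-t) (min s t)

lemma continuous_truncRemainder (t : ℝ) : Continuous (truncRemainder t) := by
  unfold truncRemainder
  fun_prop

lemma sq_le_two_mul_exp_mul {t u : ℝ} (ht : 1 ≤ t) (hu : 0 ≤ u) :
    u ^ 2 ≤ 2 * Real.exp (t * u) := by
  have hquad := Real.quadratic_le_exp_of_nonneg (x := t * u) (by positivity)
  have hut : u ≤ t * u := le_mul_of_one_le_left hu ht
  nlinarith

lemma truncRemainder_sq_le {t : ℝ} (ht : 1 ≤ t) (s : ℝ) :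
    truncRemainder t s ^ 2 ≤
      2 * Real.exp (-t ^ 2) * (Real.exp (t * s) + Real.exp (-t * s)) := by
  rw [mul_assoc, mul_add, ← Real.exp_add, ← Real.exp_add]
  have hright := Real.exp_pos (-t ^ 2 + t * s)
  have hleft := Real.exp_pos (-t ^ 2 + -t * s)
  unfold truncRemainder
  rcases le_total s (-t) with h | h
  · rw [min_eq_left (by linarith), max_eq_left h, ← neg_sq]
    have := sq_le_two_mul_exp_mul ht (u := -(s - -t)) (by linarith)
    rw [show t * -(s - -t) = -t ^ 2 + -t * s by ring] at this
    linarith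
  rcases le_total s t with h' | h'
  · rw [min_eq_left h', max_eq_right h, sub_self, zero_pow two_ne_zero]
    positivity
  · rw [min_eq_right h', max_eq_right (by linarith)]
    have := sq_le_two_mul_exp_mul ht (sub_nonneg.2 h')
    rw [show t * (s - t) = -t ^ 2 + t * s by ring] at this
    linarith

lemma integrable_truncRemainder_sq {t : ℝ} (ht : 1 ≤ t) :
    Integrable (fun s => truncRemainder t s ^ 2) (gaussianReal 0 1) := by
  refine (((integrable_exp_mul_gaussianReal t).add
    (integrable_exp_mul_gaussianReal (-t))).const_mul (2 * Real.exp (-t ^ 2))).mono'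
    ((continuous_truncRemainder t).pow 2).aestronglyMeasurable (.of_forall fun s => ?_)
  rw [Real.norm_of_nonneg (sq_nonneg _)]
  exact truncRemainder_sq_le ht s

lemma integral_exp_mul_gaussianReal (t : ℝ) :
    ∫ s, Real.exp (t * s) ∂gaussianReal 0 1 = Real.exp (t ^ 2 / 2) := by
  simpa [mgf] using congrFun (mgf_fun_id_gaussianReal (μ := 0) (v := 1)) t

lemma integral_truncRemainder_sq_le {t : ℝ} (ht : 1 ≤ t) :
    ∫ s, truncRemainder t s ^ 2 ∂gaussianReal 0 1 ≤ 4 * Real.exp (-(t ^ 2 / 2)) := by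
  have hint := (integrable_exp_mul_gaussianReal (μ := 0) (v := 1) t).add
    (integrable_exp_mul_gaussianReal (-t))
  calc ∫ s, truncRemainder t s ^ 2 ∂gaussianReal 0 1
      ≤ ∫ s, 2 * Real.exp (-t ^ 2) * (Real.exp (t * s) + Real.exp (-t * s)) ∂gaussianReal 0 1 :=
        integral_mono (integrable_truncRemainder_sq ht) (hint.const_mul _) (truncRemainder_sq_le ht)
    _ = 4 * (Real.exp (-t ^ 2) * Real.exp (t ^ 2 / 2)) := by
        rw [integral_const_mul, integral_add (integrable_exp_mul_gaussianReal t)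
          (integrable_exp_mul_gaussianReal (-t)), integral_exp_mul_gaussianReal,
          integral_exp_mul_gaussianReal, neg_sq]
        ring
    _ = 4 * Real.exp (-(t ^ 2 / 2)) := by
        rw [← Real.exp_add]
        ring_nf

lemma integrable_truncRemainder_eval_sq {t : ℝ} (ht : 1 ≤ t) (k : ι) :
    Integrable (fun g : EuclideanSpace ℝ ι => truncRemainder t (g k) ^ 2)
      (stdGaussian (EuclideanSpace ℝ ι)) :=
  (measurePreserving_eval_stdGaussian k).integrable_comp_of_integrable
    (integrable_truncRemainder_sq ht)

lemma integrable_sum_truncRemainder_sq_mul {t : ℝ} (ht : 1 ≤ t) (a : ι → ℝ) :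
    Integrable (fun g : EuclideanSpace ℝ ι => ∑ k, truncRemainder t (g k) ^ 2 * a k)
      (stdGaussian (EuclideanSpace ℝ ι)) :=
  integrable_finsetSum _ fun k _ => (integrable_truncRemainder_eval_sq ht k).mul_const _

lemma integral_sum_truncRemainder_sq_mul_le {t : ℝ} (ht : 1 ≤ t) {a : ι → ℝ}
    (ha : ∀ k, 0 ≤ a k) :
    ∫ g : EuclideanSpace ℝ ι, ∑ k, truncRemainder t (g k) ^ 2 * a k
      ∂stdGaussian (EuclideanSpace ℝ ι) ≤ 4 * Real.exp (-(t ^ 2 / 2)) * ∑ k, a k := by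
  rw [integral_finsetSum _ fun k _ => (integrable_truncRemainder_eval_sq ht k).mul_const _,
    Finset.mul_sum]
  gcongr with k
  rw [integral_mul_const]
  gcongr
  · exact ha k
  have hcoord := measurePreserving_eval_stdGaussian k
  have hcont : Continuous fun s => truncRemainder t s ^ 2 := (continuous_truncRemainder t).pow 2
  rw [← integral_map hcoord.measurable.aemeasurable hcont.aestronglyMeasurable, hcoord.map_eq]
  exact integral_truncRemainder_sq_le ht

variable [DecidableEq ι]

lemma rademacherAvg_abs_smul (c : ι → ℝ) (x : ι → X) :
    rademacherAvg (fun k => |c k| • x k) = rademacherAvg fun k => c k • x k := by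
  rw [← rademacherAvg_units_smul (fun k => if 0 ≤ c k then 1 else -1) fun k => c k • x k]
  congr 1
  ext k
  split_ifs with h
  · rw [abs_of_nonneg h, one_smul]
  · rw [abs_of_neg (not_le.1 h), neg_smul, Units.neg_smul, one_smul]

/-- Jensen's inequality, applied after replacing each `g k` by `|g k|`, whose mean is not zero. -/
lemma gaussianAbsMoment_sq_mul_rademacherAvg_le (x : ι → X) :
    gaussianAbsMoment ^ 2 * rademacherAvg x ≤ gaussianAvg x := by
  have habs (k : ι) : Integrable (fun g : EuclideanSpace ℝ ι => |g k|)
      (stdGaussian (EuclideanSpace ℝ ι)) :=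
    (measurePreserving_eval_stdGaussian k).integrable_comp_of_integrable integrable_abs_gaussianReal
  have hmean : ∫ g : EuclideanSpace ℝ ι, (fun k => |g k|) ∂stdGaussian (EuclideanSpace ℝ ι) =
      fun _ => gaussianAbsMoment := by
    ext k
    rw [eval_integral habs, gaussianAbsMoment, ← (measurePreserving_eval_stdGaussian k).map_eq,
      integral_map (measurePreserving_eval_stdGaussian k).measurable.aemeasurable (by fun_prop)]
  have hjensen := (convexOn_rademacherAvg_smul x).map_integral_le
    (f := fun (g : EuclideanSpace ℝ ι) k => |g k|)
    (by unfold rademacherAvg; simp only [Fintype.expect_eq_sum_div_card]; fun_prop) isClosed_univ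
    (by simp) (.of_eval habs)
    ((integrable_rademacherAvg_smul x).congr
      (.of_forall fun g => (rademacherAvg_abs_smul _ x).symm))
  simpa only [hmean, rademacherAvg_smul, Function.comp_def, rademacherAvg_abs_smul,
    integral_rademacherAvg_smul] using hjensen

lemma rademacherAvg_smul_le_truncRemainder {t : ℝ} (ht : 0 ≤ t) (c : ι → ℝ) (x : ι → X) :
    rademacherAvg (fun k => c k • x k) ≤
      2 * (t ^ 2 * rademacherAvg x + rademacherAvg fun k => truncRemainder t (c k) • x k) := by
  have hsplit : (fun k => c k • x k) =
      fun k => max (-t) (min (c k) t) • x k + truncRemainder t (c k) • x k := by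
    ext k
    rw [← add_smul, truncRemainder, add_sub_cancel]
  rw [hsplit]
  refine (rademacherAvg_add_le _ _).trans ?_
  gcongr
  refine rademacherAvg_smul_le_of_abs_le _ (fun k => ?_) x
  exact abs_le.2 ⟨le_max_left _ _, max_le (by linarith) (min_le_right _ _)⟩

open Module (finrank)

variable [FiniteDimensional ℝ X]

variable (ι X) in
lemma exists_linearMap_rademacherAvg_le_sum_norm_sq :
    ∃ A : X →ₗ[ℝ] EuclideanSpace ℝ (Fin (finrank ℝ X)), ∀ x : ι → X,
      rademacherAvg x ≤ finrank ℝ X * ∑ k, ‖A (x k)‖ ^ 2 ∧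
        ∑ k, ‖A (x k)‖ ^ 2 ≤ finrank ℝ X * rademacherAvg x := by
  obtain ⟨A, hA, hA'⟩ := exists_linearMap_euclideanSpace_norm_sq_le (E := X)
  refine ⟨A, fun x => ?_⟩
  rw [← rademacherAvg_eq_sum_norm_sq]
  exact ⟨rademacherAvg_map_le_map .id A hA' x, rademacherAvg_map_le_map A .id hA x⟩

/-- The Gaussian coefficients are truncated at `t`: the bounded part is controlled by the
contraction principle, the remainder by comparing `X` with a Euclidean space. -/
lemma gaussianAvg_le_of_truncation {t : ℝ} (ht : 1 ≤ t) (x : ι → X) :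
    gaussianAvg x ≤
      2 * (t ^ 2 + 4 * ((finrank ℝ X : ℝ) ^ 2 * Real.exp (-(t ^ 2 / 2)))) * rademacherAvg x := by
  obtain ⟨A, hA⟩ := exists_linearMap_rademacherAvg_le_sum_norm_sq ι X
  set n := (finrank ℝ X : ℝ)
  have hsum_int := (integrable_sum_truncRemainder_sq_mul ht fun k => ‖A (x k)‖ ^ 2).const_mul n
  calc gaussianAvg x
      = ∫ g, rademacherAvg (fun k => g k • x k) ∂stdGaussian (EuclideanSpace ℝ ι) :=
        (integral_rademacherAvg_smul x).symm
    _ ≤ ∫ g, 2 * (t ^ 2 * rademacherAvg x + n * ∑ k, truncRemainder t (g k) ^ 2 * ‖A (x k)‖ ^ 2)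
          ∂stdGaussian (EuclideanSpace ℝ ι) := by
        refine integral_mono (integrable_rademacherAvg_smul x)
          (((integrable_const _).add hsum_int).const_mul 2) fun g =>
          (rademacherAvg_smul_le_truncRemainder (by linarith) g x).trans ?_
        gcongr
        simpa [norm_smul, mul_pow] using (hA fun k => truncRemainder t (g k) • x k).1
    _ = 2 * (t ^ 2 * rademacherAvg x + n * ∫ g : EuclideanSpace ℝ ι,
          ∑ k, truncRemainder t (g k) ^ 2 * ‖A (x k)‖ ^ 2 ∂stdGaussian (EuclideanSpace ℝ ι)) := by
        rw [integral_const_mul, integral_add (integrable_const _) hsum_int, integral_const,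
          integral_const_mul, probReal_univ, one_smul]
    _ ≤ 2 * (t ^ 2 * rademacherAvg x +
          n * (4 * Real.exp (-(t ^ 2 / 2)) * (n * rademacherAvg x))) := by
        gcongr
        refine (integral_sum_truncRemainder_sq_mul_le ht fun k => sq_nonneg _).trans ?_
        gcongr
        exact (hA x).2
    _ = 2 * (t ^ 2 + 4 * (n ^ 2 * Real.exp (-(t ^ 2 / 2)))) * rademacherAvg x := by ring

lemma gaussianAvg_le_one_add_log_mul_rademacherAvg (x : ι → X) :
    gaussianAvg x ≤ 10 * (1 + Real.log (finrank ℝ X)) * rademacherAvg x := by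
  set n := (finrank ℝ X : ℝ) with hn_def
  have hlog : 0 ≤ Real.log n := Real.log_natCast_nonneg _
  have ht : √(1 + 4 * Real.log n) ^ 2 = 1 + 4 * Real.log n := Real.sq_sqrt (by positivity)
  have htail : n ^ 2 * Real.exp (-((1 + 4 * Real.log n) / 2)) ≤ 1 := by
    rcases Nat.eq_zero_or_pos (finrank ℝ X) with h0 | hpos
    · simp [hn_def, h0]
    have hn : 0 < n := Nat.cast_pos.2 hpos
    calc n ^ 2 * Real.exp (-((1 + 4 * Real.log n) / 2))
        ≤ n ^ 2 * Real.exp (-(2 * Real.log n)) := by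
          gcongr
          linarith
      _ = 1 := by
          rw [mul_comm 2, Real.exp_neg, Real.exp_mul, Real.exp_log hn, Real.rpow_two,
            mul_inv_cancel₀ (by positivity)]
  refine (gaussianAvg_le_of_truncation (t := √(1 + 4 * Real.log n))
    (Real.one_le_sqrt.2 (by linarith)) x).trans ?_
  refine mul_le_mul_of_nonneg_right ?_ (rademacherAvg_nonneg x)
  rw [ht]
  linarith

end GaussianComparison

section FamilySparsification

open Matrix
open Module (finrank)

lemma posSemidef_one_sub_transpose_mul_self {ι κ : Type*} [Fintype ι] [DecidableEq ι] [Fintype κ]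
    [DecidableEq κ] {V : Matrix ι κ ℝ} (hV : V * Vᵀ = 1) : (1 - Vᵀ * V).PosSemidef := by
  have hidem : Vᵀ * V * (Vᵀ * V) = Vᵀ * V := by
    rw [Matrix.mul_assoc, ← Matrix.mul_assoc V, hV, Matrix.one_mul]
  have hsq : (1 - Vᵀ * V)ᴴ * (1 - Vᵀ * V) = 1 - Vᵀ * V := by
    simp [conjTranspose_eq_transpose_of_trivial, Matrix.sub_mul, Matrix.mul_sub, hidem]
  rw [← hsq]
  exact posSemidef_conjTranspose_mul_self _

lemma posSemidef_one_sub_of_weights {ι κ : Type*} [Fintype ι] [DecidableEq ι] [Fintype κ]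
    [DecidableEq κ] {V : Matrix ι κ ℝ} (hV : V * Vᵀ = 1) {s : κ → ℝ} (hs : 0 ≤ s)
    (hsV : (1 - V * diagonal s * Vᵀ).PosSemidef) {W : Matrix κ κ ℝ}
    (hW : W = diagonal (fun k => √(s k)) * (Vᵀ * V)) : (1 - Wᵀ * W).PosSemidef := by
  have hdiag : diagonal (fun k => √(s k)) * diagonal (fun k => √(s k)) = diagonal s := by
    simp only [diagonal_mul_diagonal, Real.mul_self_sqrt (hs _)]
  have hWW : Wᵀ * W = Vᵀ * (V * diagonal s * Vᵀ) * V := by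
    simp only [hW, transpose_mul, diagonal_transpose, transpose_transpose, ← hdiag,
      Matrix.mul_assoc]
  have hsplit : 1 - Wᵀ * W = (1 - Vᵀ * V) + Vᴴ * (1 - V * diagonal s * Vᵀ) * V := by
    rw [hWW, conjTranspose_eq_transpose_of_trivial]
    simp only [Matrix.mul_sub, Matrix.sub_mul, Matrix.mul_one]
    abel
  rw [hsplit]
  exact (posSemidef_one_sub_transpose_mul_self hV).add (hsV.conjTranspose_mul_mul_same V)

lemma exists_orthonormal_sum_inner_smul_map {H E : Type*} [NormedAddCommGroup H]
    [InnerProductSpace ℝ H] [FiniteDimensional ℝ H] [AddCommGroup E] [Module ℝ E]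
    [FiniteDimensional ℝ E] (S : H →ₗ[ℝ] E) :
    ∃ (r : ℕ) (b : Fin r → H), r ≤ finrank ℝ E ∧ Orthonormal ℝ b ∧
      ∀ c, ∑ i, inner ℝ (b i) c • S (b i) = S c := by
  let b := stdOrthonormalBasis ℝ S.kerᗮ
  refine ⟨_, fun i => (b i : H), ?_, b.orthonormal.comp_linearIsometry S.kerᗮ.subtypeₗᵢ,
    fun c => ?_⟩
  · have hker := Submodule.finrank_add_finrank_orthogonal S.ker
    have hrank := S.finrank_range_add_finrank_ker
    have hrange := Submodule.finrank_le S.range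
    omega
  · have hproj : c - S.kerᗮ.starProjection c ∈ S.ker := by
      simpa only [Submodule.orthogonal_orthogonal] using
        Submodule.sub_starProjection_mem_orthogonal (K := S.kerᗮ) c
    rw [LinearMap.mem_ker, map_sub, sub_eq_zero] at hproj
    rw [hproj, Submodule.starProjection_apply, ← b.sum_repr (S.kerᗮ.orthogonalProjectionOnto c)]
    simp [b.repr_apply_apply]

variable {ι : Type*} [Fintype ι] {E : Type*} [NormedAddCommGroup E] [NormedSpace ℝ E]
  [FiniteDimensional ℝ E]

lemma exists_coisometry_sum_smul_eq (x : ι → E) :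
    ∃ (r : ℕ) (V : Matrix (Fin r) ι ℝ), r ≤ finrank ℝ E ∧ V * Vᵀ = 1 ∧
      ∀ k, ∑ j, (Vᵀ * V) k j • x j = x k := by
  classical
  obtain ⟨r, b, hr, hb, hexpand⟩ := exists_orthonormal_sum_inner_smul_map
    (Fintype.linearCombination ℝ x ∘ₗ (WithLp.linearEquiv 2 ℝ (ι → ℝ)).toLinearMap)
  refine ⟨r, Matrix.of fun i => WithLp.ofLp (b i), hr, ?_, fun k => ?_⟩
  · ext i j
    have hij := orthonormal_iff_ite.1 hb j i
    rw [EuclideanSpace.inner_eq_star_dotProduct] at hij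
    simpa [Matrix.mul_apply, dotProduct, one_apply, eq_comm] using hij
  · have hk := hexpand (EuclideanSpace.single k 1)
    simp only [EuclideanSpace.inner_single_right, LinearMap.comp_apply,
      Fintype.linearCombination_apply, Finset.smul_sum, smul_smul] at hk
    rw [Finset.sum_comm] at hk
    simpa [Matrix.mul_apply, Finset.sum_smul, Pi.single_apply] using hk

/-- The factor lost when a Rademacher average is estimated through Gaussian averages and back in
dimension `n`. -/
def gaussianLoss (n : ℕ) : ℝ := 10 / gaussianAbsMoment ^ 2 * (1 + Real.log n)

lemma gaussianLoss_pos (n : ℕ) : 0 < gaussianLoss n := by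
  have := gaussianAbsMoment_pos
  have := Real.log_natCast_nonneg n
  unfold gaussianLoss
  positivity

variable [DecidableEq ι]

lemma rademacherAvg_le_gaussianLoss_mul {κ : Type*} [Fintype κ] [DecidableEq κ] {W : Matrix κ ι ℝ}
    (hW : (1 - Wᵀ * W).PosSemidef) (x : ι → E) :
    rademacherAvg (fun j => ∑ k, W j k • x k) ≤
      gaussianLoss (finrank ℝ E) * rademacherAvg x := by
  have hmoment : 0 < gaussianAbsMoment ^ 2 := pow_pos gaussianAbsMoment_pos 2
  calc rademacherAvg (fun j => ∑ k, W j k • x k)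
      ≤ gaussianAvg (fun j => ∑ k, W j k • x k) / gaussianAbsMoment ^ 2 :=
        (le_div_iff₀' hmoment).2 (gaussianAbsMoment_sq_mul_rademacherAvg_le _)
    _ ≤ 10 * (1 + Real.log (finrank ℝ E)) * rademacherAvg x / gaussianAbsMoment ^ 2 := by
        gcongr
        exact (gaussianAvg_sum_smul_le hW x).trans (gaussianAvg_le_one_add_log_mul_rademacherAvg x)
    _ = gaussianLoss (finrank ℝ E) * rademacherAvg x := by
        rw [gaussianLoss]
        ring

/-- A family in an `n`-dimensional space is replaced by at most `n` rescaled members of it, chosen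
by sparsifying the Gram matrix of the coefficients of the family. -/
theorem exists_sparse_family {Y : Type*} [NormedAddCommGroup Y] [NormedSpace ℝ Y]
    (T : E →ₗ[ℝ] Y) (x : ι → E) :
    ∃ (B : Finset ι) (y : ι → E), B.card ≤ finrank ℝ E ∧ (∀ k ∉ B, y k = 0) ∧
      rademacherAvg y ≤ gaussianLoss (finrank ℝ E) * rademacherAvg x ∧
      ∑ k, ‖T (x k)‖ ^ 2 ≤ 4 * ∑ k, ‖T (y k)‖ ^ 2 := by
  obtain ⟨r, V, hr, hV, hx⟩ := exists_coisometry_sum_smul_eq x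
  rcases r.eq_zero_or_pos with rfl | hr0
  · have hzero (k : ι) : x k = 0 := by simp [← hx k, Matrix.mul_apply]
    obtain rfl : x = 0 := funext hzero
    exact ⟨∅, 0, by simp, by simp, by simp [rademacherAvg], by simp⟩
  have : Nonempty (Fin r) := ⟨⟨0, hr0⟩⟩
  obtain ⟨B, s, hB, hsB, hs, hsV, hsum⟩ := exists_sparse_weights hV fun k => ‖T (x k)‖ ^ 2
  have hy : (fun k => √(s k) • x k) =
      fun k => ∑ j, (diagonal (fun k => √(s k)) * (Vᵀ * V)) k j • x j := by
    ext k
    simp only [diagonal_mul, mul_smul, ← Finset.smul_sum, hx]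
  refine ⟨B, fun k => √(s k) • x k, by simpa using hB.trans (by simpa using hr),
    fun k hk => by simp [hsB k hk], ?_, ?_⟩
  · rw [hy]
    exact rademacherAvg_le_gaussianLoss_mul (posSemidef_one_sub_of_weights hV hs hsV rfl) x
  · simpa [norm_smul, mul_pow, Real.sq_sqrt (hs _)] using hsum

end FamilySparsification

section SquareSums

variable {ι : Type*} {a : ι → ℝ} {q d : ℝ}

lemma rpow_sub_two_mul_sq (hq : 2 < q) {t : ℝ} (ht : 0 ≤ t) : t ^ (q - 2) * t ^ 2 = t ^ q := by
  rw [← Real.rpow_two, ← Real.rpow_add_of_nonneg ht (by linarith) zero_le_two, sub_add_cancel]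

lemma sq_rpow_half {t : ℝ} (ht : 0 ≤ t) : (t ^ 2) ^ (q / 2) = t ^ q := by
  rw [← Real.rpow_two, ← Real.rpow_mul ht, mul_div_cancel₀ q two_ne_zero]

lemma sum_sq_le_card_rpow_mul_sq (hq : 2 < q) (ha : ∀ k, 0 ≤ a k) (hd : 0 ≤ d) {B : Finset ι}
    (hB : ∑ k ∈ B, a k ^ q ≤ d ^ q) :
    ∑ k ∈ B, a k ^ 2 ≤ (B.card : ℝ) ^ (1 - 2 / q) * d ^ 2 := by
  have hpower : (1 - 2 / q) * (q / 2) = q / 2 - 1 := by field_simp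
  rw [← Real.rpow_le_rpow_iff (z := q / 2) (by positivity) (by positivity) (by linarith),
    Real.mul_rpow (by positivity) (by positivity), ← Real.rpow_mul (by positivity), hpower,
    sq_rpow_half hd]
  have hpower_mean := Real.rpow_sum_le_const_mul_sum_rpow B (fun k => a k ^ 2) (p := q / 2)
    (by linarith)
  simp only [abs_pow, sq_abs, sq_rpow_half (ha _)] at hpower_mean
  exact hpower_mean.trans (by gcongr)

variable [Fintype ι] {m : ℕ} {τ : ℝ}

lemma card_filter_lt_le (hq : 0 < q) (hτ : 0 ≤ τ) (hm : 0 < m)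
    (hsub : ∀ B : Finset ι, B.card ≤ m → ∑ k ∈ B, a k ^ q ≤ m * τ ^ q) :
    (Finset.univ.filter fun k => τ < a k).card ≤ m := by
  by_contra! hlarge
  obtain ⟨B, hB, hcard⟩ := Finset.exists_subset_card_eq hlarge.le
  have hnonempty : B.Nonempty := Finset.card_pos.1 (hcard ▸ hm)
  refine (hsub B hcard.le).not_gt ?_
  calc m * τ ^ q
      = ∑ _k ∈ B, τ ^ q := by rw [Finset.sum_const, hcard, nsmul_eq_mul]
    _ < ∑ k ∈ B, a k ^ q := Finset.sum_lt_sum_of_nonempty hnonempty fun k hk =>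
        Real.rpow_lt_rpow hτ (Finset.mem_filter.1 (hB hk)).2 hq

lemma sum_filter_not_lt_rpow_le (hq : 2 < q) (ha : ∀ k, 0 ≤ a k) (hτ : 0 ≤ τ) :
    ∑ k with ¬τ < a k, a k ^ q ≤ τ ^ (q - 2) * ∑ k, a k ^ 2 := by
  rw [Finset.mul_sum]
  refine (Finset.sum_le_sum fun k hk => ?_).trans
    (Finset.sum_le_univ_sum_of_nonneg fun _ => by positivity)
  rw [← rpow_sub_two_mul_sq hq (ha k)]
  gcongr
  · exact ha k
  · exact not_lt.1 (Finset.mem_filter.1 hk).2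

/-- At most `m` terms exceed the threshold `d / m ^ (1 / q)`; the terms below it are controlled by
the sum of the squares. -/
lemma sum_rpow_le_two_mul (hq : 2 < q) (ha : ∀ k, 0 ≤ a k) (hd : 0 ≤ d)
    (hsub : ∀ B : Finset ι, B.card ≤ m → ∑ k ∈ B, a k ^ q ≤ d ^ q)
    (hsq : ∑ k, a k ^ 2 ≤ (m : ℝ) ^ (1 - 2 / q) * d ^ 2) : ∑ k, a k ^ q ≤ 2 * d ^ q := by
  have hq0 : 0 < q := by linarith
  have hθ : 0 < 1 - 2 / q := sub_pos.2 ((div_lt_one hq0).2 hq)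
  rcases m.eq_zero_or_pos with rfl | hm
  · rw [Nat.cast_zero, Real.zero_rpow hθ.ne', zero_mul] at hsq
    have hzero := (Finset.sum_eq_zero_iff_of_nonneg fun k _ => sq_nonneg (a k)).1
      (hsq.antisymm (by positivity))
    simp only [Finset.mem_univ, true_imp_iff, sq_eq_zero_iff] at hzero
    simp only [hzero, Real.zero_rpow hq0.ne', Finset.sum_const_zero]
    positivity
  have hm0 : (0 : ℝ) < m := Nat.cast_pos.2 hm
  set M := (m : ℝ) ^ (1 / q)
  have hM : 0 < M := by positivity
  have hMq : M ^ q = m := by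
    rw [← Real.rpow_mul hm0.le, one_div_mul_cancel (by positivity), Real.rpow_one]
  have hMθ : M ^ (q - 2) = (m : ℝ) ^ (1 - 2 / q) := by
    rw [← Real.rpow_mul hm0.le]
    congr 1
    field_simp
  have hcard : (Finset.univ.filter fun k => d / M < a k).card ≤ m := by
    refine card_filter_lt_le hq0 (by positivity) hm (by
      rwa [Real.div_rpow hd hM.le, hMq, mul_div_cancel₀ _ hm0.ne'])
  have hsmall : ∑ k with ¬d / M < a k, a k ^ q ≤ d ^ q :=
    calc ∑ k with ¬d / M < a k, a k ^ q
        ≤ (d / M) ^ (q - 2) * ∑ k, a k ^ 2 := sum_filter_not_lt_rpow_le hq ha (by positivity)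
      _ ≤ (d / M) ^ (q - 2) * (M ^ (q - 2) * d ^ 2) := by
          rw [hMθ]
          gcongr
      _ = d ^ q := by
          rw [← mul_assoc, ← Real.mul_rpow (by positivity) hM.le, div_mul_cancel₀ _ hM.ne',
            rpow_sub_two_mul_sq hq hd]
  rw [← Finset.sum_filter_add_sum_filter_not Finset.univ fun k => d / M < a k]
  linarith [hsub _ hcard]

end SquareSums

section Cotype

open Module (finrank)

variable {X Y : Type*} [NormedAddCommGroup X] [NormedSpace ℝ X] [NormedAddCommGroup Y]
  [NormedSpace ℝ Y] {q d : ℝ} {m : ℕ} {T : X →L[ℝ] Y}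

lemma sum_ofReal_rpow_rpow_le_ofReal_iff {ι : Type*} [Fintype ι] (hq : 0 < q) (hd : 0 ≤ d)
    {a : ι → ℝ} (ha : ∀ k, 0 ≤ a k) :
    (∑ k, ENNReal.ofReal (a k) ^ q) ^ (1 / q) ≤ ENNReal.ofReal d ↔ ∑ k, a k ^ q ≤ d ^ q := by
  have hpow (k : ι) : 0 ≤ a k ^ q := Real.rpow_nonneg (ha k) q
  simp only [ENNReal.ofReal_rpow_of_nonneg (ha _) hq.le]
  rw [← ENNReal.ofReal_sum_of_nonneg fun k _ => hpow k, one_div, ENNReal.rpow_inv_le_iff hq,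
    ENNReal.ofReal_rpow_of_nonneg hd hq.le, ENNReal.ofReal_le_ofReal_iff (by positivity)]

lemma cotypeN_le_ofReal_iff (hq : 0 < q) (hd : 0 ≤ d) :
    cotypeN q m T ≤ ENNReal.ofReal d ↔
      ∀ x : Fin m → X, radAvg x ≤ 1 → ∑ k, ‖T (x k)‖ ^ q ≤ d ^ q := by
  simp only [cotypeN, iSup_le_iff, Subtype.forall, Real.sqrt_le_one,
    sum_ofReal_rpow_rpow_le_ofReal_iff hq hd fun _ => norm_nonneg (T _)]

variable {ι : Type*} [Fintype ι] [DecidableEq ι]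

lemma sum_norm_rpow_le_of_cotypeN_le (hq : 0 < q) (hd : 0 ≤ d)
    (hcot : cotypeN q m T ≤ ENNReal.ofReal d) {x : ι → X} {R : ℝ} (hR : 0 < R)
    (hx : rademacherAvg x ≤ R ^ 2) {B : Finset ι} (hB : B.card ≤ m) :
    ∑ k ∈ B, ‖T (x k)‖ ^ q ≤ (R * d) ^ q := by
  obtain ⟨y, hy, hsum⟩ := exists_fin_family_of_card_le (fun k => R⁻¹ • x k) hB
  have hy_le : radAvg y ≤ 1 := by
    rw [rademacherAvg_smul, inv_pow] at hy
    exact hy.trans (inv_mul_le_one_of_le₀ hx (by positivity))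
  have hcot_y := (cotypeN_le_ofReal_iff hq hd).1 hcot y hy_le
  rw [hsum (fun z => ‖T z‖ ^ q) (by simp [hq.ne'])] at hcot_y
  simp only [map_smul, norm_smul, Real.mul_rpow (norm_nonneg R⁻¹) (norm_nonneg _),
    ← Finset.mul_sum] at hcot_y
  rwa [Real.norm_of_nonneg (by positivity), Real.inv_rpow hR.le, inv_mul_le_iff₀ (by positivity),
    ← Real.mul_rpow hR.le hd] at hcot_y

variable [FiniteDimensional ℝ X]

lemma sum_norm_sq_le_of_cotypeN_le (hq : 2 < q) (hd : 0 ≤ d)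
    (hcot : cotypeN q m T ≤ ENNReal.ofReal d) (hm : finrank ℝ X ≤ m) {x : ι → X}
    (hx : rademacherAvg x ≤ 1) :
    ∑ k, ‖T (x k)‖ ^ 2 ≤
      4 * gaussianLoss (finrank ℝ X) * (finrank ℝ X : ℝ) ^ (1 - 2 / q) * d ^ 2 := by
  obtain ⟨B, y, hB, hyB, hy, hTy⟩ := exists_sparse_family T.toLinearMap x
  set L := gaussianLoss (finrank ℝ X)
  have hL : 0 < L := gaussianLoss_pos _
  have hθ : 0 ≤ 1 - 2 / q := sub_nonneg.2 ((div_le_one (by linarith)).2 hq.le)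
  have hy_le : rademacherAvg y ≤ √L ^ 2 := by
    rw [Real.sq_sqrt hL.le]
    exact hy.trans (mul_le_of_le_one_right hL.le hx)
  have hy_rpow := sum_norm_rpow_le_of_cotypeN_le (by linarith) hd hcot (Real.sqrt_pos.2 hL) hy_le
    (hB.trans hm)
  calc ∑ k, ‖T (x k)‖ ^ 2
      ≤ 4 * ∑ k, ‖T (y k)‖ ^ 2 := hTy
    _ = 4 * ∑ k ∈ B, ‖T (y k)‖ ^ 2 := by
        rw [← Finset.sum_subset B.subset_univ fun k _ hk => by simp [hyB k hk]]
    _ ≤ 4 * ((B.card : ℝ) ^ (1 - 2 / q) * (√L * d) ^ 2) := by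
        gcongr
        exact sum_sq_le_card_rpow_mul_sq hq (fun k => norm_nonneg _) (by positivity) hy_rpow
    _ = 4 * L * (B.card : ℝ) ^ (1 - 2 / q) * d ^ 2 := by
        rw [mul_pow, Real.sq_sqrt hL.le]
        ring
    _ ≤ 4 * L * (finrank ℝ X : ℝ) ^ (1 - 2 / q) * d ^ 2 := by gcongr

theorem cotype_le_two_mul_cotypeN (hq : 2 < q) (T : X →L[ℝ] Y) (hm : finrank ℝ X ≤ m)
    (hloss : 4 * gaussianLoss (finrank ℝ X) * (finrank ℝ X : ℝ) ^ (1 - 2 / q) ≤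
      (m : ℝ) ^ (1 - 2 / q)) :
    cotype q T ≤ 2 * cotypeN q m T := by
  have hq0 : 0 < q := by linarith
  rcases eq_or_ne (cotypeN q m T) ∞ with htop | hfinite
  · simp [htop]
  obtain ⟨d, hd, hcot⟩ : ∃ d : ℝ, 0 ≤ d ∧ ENNReal.ofReal d = cotypeN q m T :=
    ⟨_, ENNReal.toReal_nonneg, ENNReal.ofReal_toReal hfinite⟩
  have htwo : (2 : ℝ≥0∞) * ENNReal.ofReal d = ENNReal.ofReal (2 * d) := by
    rw [ENNReal.ofReal_mul zero_le_two, ENNReal.ofReal_ofNat]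
  rw [← hcot, htwo, cotype]
  refine iSup_le fun N => (cotypeN_le_ofReal_iff hq0 (by positivity)).2 fun x hx => ?_
  rw [radAvg_eq_rademacherAvg] at hx
  calc ∑ k, ‖T (x k)‖ ^ q
      ≤ 2 * d ^ q := by
        refine sum_rpow_le_two_mul hq (m := m) (fun k => norm_nonneg _) hd (fun B hB => ?_) ?_
        · simpa using sum_norm_rpow_le_of_cotypeN_le hq0 hd hcot.ge one_pos (by simpa using hx) hB
        · refine (sum_norm_sq_le_of_cotypeN_le hq hd hcot.ge hm hx).trans ?_
          gcongr
    _ ≤ 2 ^ q * d ^ q := by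
        gcongr
        exact Real.self_le_rpow_of_one_le one_le_two (by linarith)
    _ = (2 * d) ^ q := (Real.mul_rpow zero_le_two hd).symm

end Cotype

lemma exists_nat_le_rpow {K θ : ℝ} (hK : 1 ≤ K) (hθ : 0 < θ) (hθ1 : θ ≤ 1) :
    ∃ N : ℕ, 1 ≤ N ∧ K ≤ (N : ℝ) ^ θ ∧ (N : ℝ) ≤ (2 * K) ^ (1 / θ) := by
  have hroot : 1 ≤ K ^ (1 / θ) := Real.one_le_rpow hK (by positivity)
  refine ⟨⌈K ^ (1 / θ)⌉₊, Nat.one_le_ceil_iff.2 (by positivity), ?_, ?_⟩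
  · rw [← Real.rpow_inv_le_iff_of_pos (by positivity) (by positivity) hθ, ← one_div]
    exact Nat.le_ceil _
  · have htwo : (2 : ℝ) ≤ 2 ^ (1 / θ) :=
      Real.self_le_rpow_of_one_le one_le_two (one_le_one_div hθ hθ1)
    rw [Real.mul_rpow zero_le_two (by positivity)]
    exact (Nat.ceil_le_two_mul (by linarith)).trans (by gcongr)

theorem statement4_general :
    ∃ c₀ : ℝ, 0 < c₀ ∧
      ∀ (q : ℝ), 2 < q →
        ∀ (E Y : Type*) [NormedAddCommGroup E] [NormedSpace ℝ E] [FiniteDimensional ℝ E]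
          [NormedAddCommGroup Y] [NormedSpace ℝ Y] (T : E →L[ℝ] Y) (n : ℕ),
          Module.finrank ℝ E = n →
          ∃ m : ℕ, (m : ℝ) ≤ n * (c₀ * (1 + Real.log n)) ^ (1 / (1 - 2 / q)) ∧
            cotype q T ≤ 2 * cotypeN q m T := by
  refine ⟨2 * max 1 (4 * (10 / gaussianAbsMoment ^ 2)), by positivity, ?_⟩
  rintro q hq E Y _ _ _ _ _ T n rfl
  set n := Module.finrank ℝ E
  set K := max 1 (4 * (10 / gaussianAbsMoment ^ 2)) * (1 + Real.log n) with hK_def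
  have hlog : 0 ≤ Real.log n := Real.log_natCast_nonneg n
  have hK : 1 ≤ K := one_le_mul_of_one_le_of_one_le (le_max_left _ _) (by linarith)
  have hlossK : 4 * gaussianLoss n ≤ K := by
    rw [gaussianLoss, ← mul_assoc, hK_def]
    gcongr
    exact le_max_right _ _
  have hθ : 0 < 1 - 2 / q := sub_pos.2 ((div_lt_one (by linarith)).2 hq)
  have hθ1 : 1 - 2 / q ≤ 1 := sub_le_self _ (by positivity)
  obtain ⟨N, hN, hKN, hNK⟩ := exists_nat_le_rpow hK hθ hθ1
  refine ⟨n * N, ?_, cotype_le_two_mul_cotypeN hq T (Nat.le_mul_of_pos_right n hN) ?_⟩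
  · rw [Nat.cast_mul, mul_assoc, ← hK_def]
    gcongr
  · rw [Nat.cast_mul, Real.mul_rpow n.cast_nonneg N.cast_nonneg, mul_comm]
    gcongr
    exact hlossK.trans hKN

/-- for `2 < q < ∞` and an `n`-dimensional real Banach space `E`,
there are an absolute constant `c₀` and `m ≤ n·(c₀(1+ln n))^{1/(1-2/q)}` with
`C_q(Id_E) ≤ 2 · C_q^m(Id_E)`. -/
theorem statement4 :
    ∃ c₀ : ℝ, 0 < c₀ ∧
      ∀ (q : ℝ), 2 < q →
        ∀ (E : Type*) [NormedAddCommGroup E] [NormedSpace ℝ E] [CompleteSpace E]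
          [FiniteDimensional ℝ E] (n : ℕ), Module.finrank ℝ E = n →
          ∃ m : ℕ, (m : ℝ) ≤ n * (c₀ * (1 + Real.log n)) ^ (1 / (1 - 2 / q)) ∧
            cotype q (ContinuousLinearMap.id ℝ E) ≤
              2 * cotypeN q m (ContinuousLinearMap.id ℝ E) := by
  obtain ⟨c₀, hc₀, hbound⟩ := statement4_general
  exact ⟨c₀, hc₀, fun q hq E _ _ _ _ n hn => hbound q hq E E (.id ℝ E) n hn⟩

end
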